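/- arXiv:2407.20069 — 7 statements merged into one kernel-verified Lean document; each statement's English description precedes it below -/
import Mathlib

section
/- Let a > 1/2 be a real number with G(a) = 0, let m > 0 be real, and set n := a·m + 1. Then F(t_max(n,m), n, m) = 1 − m/n; that is, the linear relationship n = a·m + 1 with a a root of the transcendental equation G(a) = 0 solves the optimality condition making the time-averaged distance at the maximum-probability time equal to 1 − m/n. -/
open Real

/-- Maximum-probability time of the Szegedy quantum walk on a complete graph. -/
noncomputable def tMax (n m : ℝ) : ℝ :=
  arctan (Real.sqrt ((2 * n - m - 2) / m)) / (2 * arccos ((n - m - 1) / (n - 1)))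

/-- Trig-extended time-averaged distance. -/
noncomputable def F (t n m : ℝ) : ℝ :=
  2 * (n - 1) * (n - m) *
      (2 * t + 1 -
        Real.sin ((2 * t + 1) * arccos ((n - m - 1) / (n - 1))) /
          Real.sin (arccos ((n - m - 1) / (n - 1)))) /
    (n * (2 * n - m - 2) * (t + 1))

/-- The transcendental expression. -/
noncomputable def G (a : ℝ) : ℝ :=
  (4 * Real.sqrt 2 * a ^ ((3 : ℝ) / 2) + 2 * a - 3) * arctan (Real.sqrt (2 * a - 1)) -
    2 * π * (Real.sqrt 2 * a ^ ((3 : ℝ) / 2) - 1)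

/-!
On the line `n = a * m + 1` both the walk angle `θ = arccos ((n - m - 1) / (n - 1))` and the time
`tMax n m` depend on `a` alone. With `φ = arctan √(2 * a - 1)` the half-angle formula gives
`θ = π - 2 * φ`, so that `tMax n m = φ / (2 * θ)` and `(2 * tMax n m + 1) * θ = φ + θ = π - φ`.
The quotient of sines in `F` therefore collapses to
`sin φ / sin (2 * φ) = 1 / (2 * cos φ) = √(2 * a) / 2`, and `F (tMax n m) n m` becomes
`(1 - m / n) * (1 + G a / ((2 * a - 1) * (2 * π - 3 * φ)))`.
-/

theorem sqrt_two_mul_rpow_three_halves {a : ℝ} (ha : 0 ≤ a) :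
    √2 * a ^ ((3 : ℝ) / 2) = a * √(2 * a) := by
  have h_rpow : a ^ ((3 : ℝ) / 2) = a * √a := by
    rw [show (3 : ℝ) / 2 = 1 + 1 / 2 by norm_num, rpow_add_of_nonneg ha zero_le_one (by norm_num),
      rpow_one, ← sqrt_eq_rpow]
  rw [h_rpow, sqrt_mul zero_le_two]
  ring

theorem arccos_one_sub_div_one_add {x : ℝ} (hx : 0 ≤ x) :
    arccos ((1 - x) / (1 + x)) = 2 * arctan √x := by
  have h_nonneg : 0 ≤ 2 * arctan √x := mul_nonneg zero_le_two (arctan_nonneg.2 (sqrt_nonneg x))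
  have h_le_pi : 2 * arctan √x ≤ π := by linarith [arctan_lt_pi_div_two √x]
  refine arccos_eq_of_eq_cos h_nonneg h_le_pi ?_
  rw [cos_two_mul, cos_sq_arctan, sq_sqrt hx]
  field_simp
  ring

theorem sin_pi_sub_div_sin_pi_sub_two_mul {φ : ℝ} (hφ : sin φ ≠ 0) :
    sin (π - φ) / sin (π - 2 * φ) = (2 * cos φ)⁻¹ := by
  rw [sin_pi_sub, sin_pi_sub, sin_two_mul, mul_right_comm, div_mul_cancel_right₀ hφ]

section Ratio

variable {a : ℝ}

theorem arccos_sub_one_div_self (ha : 1 / 2 ≤ a) :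
    arccos ((a - 1) / a) = π - 2 * arctan √(2 * a - 1) := by
  rw [← arccos_one_sub_div_one_add (by linarith), ← arccos_neg]
  congr 1
  have : a ≠ 0 := by linarith
  field_simp
  ring

theorem inv_two_mul_cos_arctan_sqrt (ha : 1 / 2 ≤ a) :
    (2 * cos (arctan √(2 * a - 1)))⁻¹ = √(2 * a) / 2 := by
  rw [cos_arctan, sq_sqrt (by linarith), add_sub_cancel, one_div, mul_inv, inv_inv]
  ring

theorem G_eq_mul_arctan_sub (ha : 0 ≤ a) :
    G a = (4 * a * √(2 * a) + 2 * a - 3) * arctan √(2 * a - 1) -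
      2 * π * (a * √(2 * a) - 1) := by
  rw [G, mul_assoc 4, sqrt_two_mul_rpow_three_halves ha, mul_assoc 4]

end Ratio

section Line

variable {m : ℝ}

theorem cos_angle_mul_add_one (a : ℝ) (hm : m ≠ 0) :
    (a * m + 1 - m - 1) / (a * m + 1 - 1) = (a - 1) / a := by
  rw [← mul_div_mul_right (a - 1) a hm]
  ring_nf

theorem tMax_mul_add_one (a : ℝ) (hm : m ≠ 0) :
    tMax (a * m + 1) m = arctan √(2 * a - 1) / (2 * arccos ((a - 1) / a)) := by
  have h_tan : (2 * (a * m + 1) - m - 2) / m = 2 * a - 1 := by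
    field_simp
    ring
  rw [tMax, h_tan, cos_angle_mul_add_one a hm]

theorem F_mul_add_one (t a : ℝ) (hm : m ≠ 0) :
    F t (a * m + 1) m = (a * m + 1 - m) / (a * m + 1) *
      (2 * a *
        (2 * t + 1 - sin ((2 * t + 1) * arccos ((a - 1) / a)) / sin (arccos ((a - 1) / a))) /
          ((2 * a - 1) * (t + 1))) := by
  rw [F, cos_angle_mul_add_one a hm, div_mul_div_comm,
    ← mul_div_mul_right ((a * m + 1 - m) * _) _ hm]
  congr 1 <;> ring

theorem F_tMax_mul_add_one {a : ℝ} (ha : 1 / 2 < a) (hm : m ≠ 0) :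
    F (tMax (a * m + 1) m) (a * m + 1) m = (a * m + 1 - m) / (a * m + 1) *
      (1 + G a / ((2 * a - 1) * (2 * π - 3 * arctan √(2 * a - 1)))) := by
  rw [F_mul_add_one _ _ hm, tMax_mul_add_one a hm, arccos_sub_one_div_self ha.le,
    G_eq_mul_arctan_sub (by linarith)]
  have h_cos := inv_two_mul_cos_arctan_sqrt ha.le
  have hφ_pos : 0 < arctan √(2 * a - 1) := arctan_pos.2 (sqrt_pos.2 (by linarith))
  have hφ_lt : arctan √(2 * a - 1) < π / 2 := arctan_lt_pi_div_two _
  generalize arctan √(2 * a - 1) = φ at *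
  generalize hθ : π - 2 * φ = θ
  have hθ_pos : 0 < θ := by linarith
  have h_ratio : 2 * a - 1 ≠ 0 := by linarith
  have h_angle : (2 * (φ / (2 * θ)) + 1) * θ = π - φ := by
    field_simp
    linarith
  have h_sin : sin φ ≠ 0 := (sin_pos_of_pos_of_lt_pi hφ_pos (by linarith)).ne'
  have h_sin_ratio : sin ((2 * (φ / (2 * θ)) + 1) * θ) / sin θ = √(2 * a) / 2 := by
    rw [h_angle, ← hθ, sin_pi_sub_div_sin_pi_sub_two_mul h_sin, h_cos]
  have h_phase : 2 * π - 3 * φ = φ + 2 * θ := by linarith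
  rw [h_sin_ratio, h_phase, show π = 2 * φ + θ by linarith]
  congr 1
  field_simp
  ring

end Line

theorem solution_of_optimality_condition_general {a m n : ℝ} (ha : 1 / 2 < a) (hm : m ≠ 0)
    (hn₀ : n ≠ 0) (hn : n = a * m + 1) :
    F (tMax n m) n m = 1 - m / n ↔ n = m ∨ G a = 0 := by
  have h_ratio : 2 * a - 1 ≠ 0 := by linarith
  have h_phase : 2 * π - 3 * arctan √(2 * a - 1) ≠ 0 := by
    linarith [arctan_lt_pi_div_two √(2 * a - 1), pi_pos]
  have h_F := F_tMax_mul_add_one ha hm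
  rw [← hn] at h_F
  rw [h_F, one_sub_div hn₀, mul_right_eq_self₀, add_eq_left, or_comm]
  simp [sub_eq_zero, hn₀, h_ratio, h_phase]

theorem solution_of_optimality_condition (a m n : ℝ) (ha : 1 / 2 < a) (hG : G a = 0)
    (hm : 0 < m) (hn : n = a * m + 1) :
    F (tMax n m) n m = 1 - m / n := by
  have hn₀ : n ≠ 0 := by rw [hn]; positivity
  exact (solution_of_optimality_condition_general ha hm.ne' hn₀ hn).2 (Or.inr hG)
end

section
/- Let n, m be real numbers with n > 1, 0 < m < 2(n−1). Then F(t_max(n,m), n, m) = 1 − m/n if and only if m = n or Q(n,m) = 0. -/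
open Real

/-- The expression `Q(n,m)` from the optimality condition. -/
noncomputable def Q (n m : ℝ) : ℝ :=
  2 * π * (m - Real.sqrt 2 * m * ((n - 1) / m) ^ ((3 : ℝ) / 2)) +
    (2 * (n - 1) * (2 * Real.sqrt 2 * Real.sqrt ((n - 1) / m) + 1) - 3 * m) *
      arctan (Real.sqrt ((2 * n - m - 2) / m))

/-!
Write `θ = arccos ((n - m - 1) / (n - 1))` and `φ = arctan √((2n - m - 2) / m)`. The half-angle
formula makes `2φ` the supplement of `θ`, so at `t = tMax n m = φ / (2θ)` the argument
`(2t + 1)θ = φ + θ` equals `π - φ`, and the trigonometric ratio in `F` collapses to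
`sin φ / sin 2φ = 1 / (2 cos φ)`, which is algebraic in `n` and `m`. After division by the common
factor `n - m`, the equation `F t n m = 1 - m / n` is linear in that ratio and in `t`; clearing
the denominator `2θ` of `tMax n m` turns it into `Q n m = 0`.
-/

theorem cos_arctan_sqrt_div {a b : ℝ} (ha : 0 ≤ a) (hb : 0 < b) :
    cos (arctan √(a / b)) = √(b / (a + b)) := by
  rw [cos_arctan, sq_sqrt (by positivity), one_div, ← sqrt_inv, one_add_div hb.ne', inv_div,
    add_comm]

theorem two_mul_arctan_sqrt_one_sub_div_one_add {y : ℝ} (hy_gt : -1 < y) (hy_le : y ≤ 1) :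
    2 * arctan √((1 - y) / (1 + y)) = arccos y := by
  set φ := arctan √((1 - y) / (1 + y))
  have hcos : cos (2 * φ) = y := by
    rw [cos_two_mul, cos_arctan_sqrt_div (by linarith) (by linarith),
      sq_sqrt (div_nonneg (by linarith) (by linarith))]
    ring
  have hφ_nonneg : 0 ≤ φ := arctan_nonneg.2 (sqrt_nonneg _)
  have hφ_lt : φ < π / 2 := arctan_lt_pi_div_two _
  rw [← arccos_cos (by linarith) (by linarith : 2 * φ ≤ π), hcos]

theorem sin_div_sin_two_mul {x : ℝ} (hx : sin x ≠ 0) :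
    sin x / sin (2 * x) = 1 / (2 * cos x) := by
  rw [sin_two_mul, mul_right_comm, div_mul_cancel_right₀ hx, one_div]

/-- The rotation angle `θ` of the quantum walk: the angle in `F` and in the denominator of
`tMax`. -/
noncomputable def walkAngle (n m : ℝ) : ℝ :=
  arccos ((n - m - 1) / (n - 1))

/-- The angle `φ` in the numerator of `tMax` and in `Q`, so that `tMax = φ / (2θ)`. -/
noncomputable def phaseAngle (n m : ℝ) : ℝ :=
  arctan √((2 * n - m - 2) / m)

theorem F_eq_one_sub_div_iff {t n m : ℝ} (hn : n ≠ 0) (hd : 2 * n - m - 2 ≠ 0) (ht : t + 1 ≠ 0) :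
    F t n m = 1 - m / n ↔ m = n ∨
      2 * (n - 1) * (2 * t + 1 - sin ((2 * t + 1) * walkAngle n m) / sin (walkAngle n m)) =
        (2 * n - m - 2) * (t + 1) := by
  unfold F walkAngle
  generalize sin ((2 * t + 1) * _) / sin _ = r
  calc 2 * (n - 1) * (n - m) * (2 * t + 1 - r) / (n * (2 * n - m - 2) * (t + 1)) = 1 - m / n
    _ ↔ (n - m) * (2 * (n - 1) * (2 * t + 1 - r)) =
          (n - m) * ((2 * n - m - 2) * (t + 1)) := by
        rw [one_sub_div hn, div_eq_div_iff (by positivity) hn,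
          ← mul_right_inj' hn (b := (n - m) * (2 * (n - 1) * (2 * t + 1 - r)))]
        ring_nf
    _ ↔ m = n ∨ 2 * (n - 1) * (2 * t + 1 - r) = (2 * n - m - 2) * (t + 1) := by
        rw [mul_eq_mul_left_iff, sub_eq_zero, or_comm, eq_comm (a := n)]

section Angles

variable {n m : ℝ} (hm0 : 0 < m) (hm2 : m < 2 * (n - 1))
include hm0 hm2

theorem phaseAngle_pos : 0 < phaseAngle n m :=
  arctan_pos.2 (sqrt_pos.2 (div_pos (by linarith) hm0))

theorem cos_phaseAngle : cos (phaseAngle n m) = √(m / (2 * (n - 1))) := by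
  rw [phaseAngle, cos_arctan_sqrt_div (by linarith) hm0]
  ring_nf

theorem walkAngle_eq_pi_sub_two_mul_phaseAngle : walkAngle n m = π - 2 * phaseAngle n m := by
  have hn : 0 < n - 1 := by linarith
  have hratio : (2 * n - m - 2) / m = (1 - (m / (n - 1) - 1)) / (1 + (m / (n - 1) - 1)) := by
    rw [add_sub_cancel]
    field_simp
    ring
  have hlower : -1 < m / (n - 1) - 1 := by linarith [div_pos hm0 hn]
  have hupper : m / (n - 1) - 1 ≤ 1 := by linarith [(div_lt_iff₀ hn).2 hm2]
  rw [walkAngle, phaseAngle, hratio, two_mul_arctan_sqrt_one_sub_div_one_add hlower hupper,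
    ← arccos_neg]
  congr 1
  field_simp
  ring

theorem walkAngle_pos : 0 < walkAngle n m := by
  rw [walkAngle_eq_pi_sub_two_mul_phaseAngle hm0 hm2, phaseAngle]
  linarith [arctan_lt_pi_div_two √((2 * n - m - 2) / m)]

theorem tMax_pos : 0 < tMax n m :=
  div_pos (phaseAngle_pos hm0 hm2) (mul_pos two_pos (walkAngle_pos hm0 hm2))

theorem two_mul_walkAngle_mul_tMax : 2 * walkAngle n m * tMax n m = phaseAngle n m :=
  mul_div_cancel₀ _ (mul_pos two_pos (walkAngle_pos hm0 hm2)).ne'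

theorem sin_div_sin_walkAngle_tMax :
    sin ((2 * tMax n m + 1) * walkAngle n m) / sin (walkAngle n m) =
      √2 * √((n - 1) / m) / 2 := by
  have hsin : sin (phaseAngle n m) ≠ 0 :=
    (sin_pos_of_pos_of_lt_pi (phaseAngle_pos hm0 hm2)
      ((arctan_lt_pi_div_two _).trans (by linarith [pi_pos]))).ne'
  have harg : (2 * tMax n m + 1) * walkAngle n m = π - phaseAngle n m := by
    linear_combination two_mul_walkAngle_mul_tMax hm0 hm2 +
      walkAngle_eq_pi_sub_two_mul_phaseAngle hm0 hm2
  calc sin ((2 * tMax n m + 1) * walkAngle n m) / sin (walkAngle n m)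
    _ = sin (phaseAngle n m) / sin (2 * phaseAngle n m) := by
        rw [harg, walkAngle_eq_pi_sub_two_mul_phaseAngle hm0 hm2, sin_pi_sub, sin_pi_sub]
    _ = (√(m / (2 * (n - 1))))⁻¹ / 2 := by
        rw [sin_div_sin_two_mul hsin, cos_phaseAngle hm0 hm2]
        ring
    _ = √2 * √((n - 1) / m) / 2 := by
        rw [← sqrt_inv, inv_div, mul_div_assoc, sqrt_mul zero_le_two]

theorem Q_eq_two_mul_walkAngle_mul :
    Q n m = 2 * walkAngle n m *
      (2 * (n - 1) * (2 * tMax n m + 1 -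
        sin ((2 * tMax n m + 1) * walkAngle n m) / sin (walkAngle n m)) -
        (2 * n - m - 2) * (tMax n m + 1)) := by
  have hs : m * √((n - 1) / m) ^ 2 = n - 1 := by
    rw [sq_sqrt (div_nonneg (by linarith) hm0.le), mul_div_cancel₀ _ hm0.ne']
  have hpow : ((n - 1) / m) ^ ((3 : ℝ) / 2) = √((n - 1) / m) ^ 3 := by
    rw [rpow_div_two_eq_sqrt _ (div_nonneg (by linarith) hm0.le), rpow_ofNat]
  rw [sin_div_sin_walkAngle_tMax hm0 hm2, Q, ← phaseAngle, hpow]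
  linear_combination
    -(2 * π * √2 * √((n - 1) / m)) * hs -
    (2 * n + m - 2) * two_mul_walkAngle_mul_tMax hm0 hm2 -
    (2 * m - 2 * (n - 1) * √2 * √((n - 1) / m)) * walkAngle_eq_pi_sub_two_mul_phaseAngle hm0 hm2

end Angles

theorem optimality_condition_iff (n m : ℝ) (hn : 1 < n) (hm0 : 0 < m)
    (hm2 : m < 2 * (n - 1)) :
    F (tMax n m) n m = 1 - m / n ↔ m = n ∨ Q n m = 0 := by
  have hn0 : n ≠ 0 := by positivity
  have hd : 2 * n - m - 2 ≠ 0 := by linarith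
  have ht : tMax n m + 1 ≠ 0 := by linarith [tMax_pos hm0 hm2]
  rw [F_eq_one_sub_div_iff hn0 hd ht, Q_eq_two_mul_walkAngle_mul hm0 hm2,
    mul_eq_zero_iff_left (mul_pos two_pos (walkAngle_pos hm0 hm2)).ne', sub_eq_zero]
end

section
/- Let n, m be real numbers with n > 1 and 0 < m < 2(n−1), and set θ := arccos(1 − m/(n−1)) and T := t_max(n,m). Then sin((2T+1)·θ)/sin θ = √((n−1)/(2m)). (This is the simplification of the Chebyshev polynomial U_{2T} evaluated at (n−m−1)/(n−1) when T is the maximum-probability time.) -/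
open Real

/-!
For `0 < θ ≤ π` the half-angle formulas give `√((1 + cos θ) / (1 - cos θ)) = cot (θ / 2)`, whose
arctangent is `(π - θ) / 2`. With `cos θ = 1 - m / (n - 1)` this says `T = (π - θ) / (4 θ)`, so the
phase `(2 T + 1) θ` is `π / 2 + θ / 2`. Its sine is `cos (θ / 2)`, and dividing by
`sin θ = 2 sin (θ / 2) cos (θ / 2)` leaves `1 / (2 sin (θ / 2))`.
-/

theorem arctan_sqrt_one_add_cos_div_one_sub_cos {θ : ℝ} (hθ : 0 < θ) (hθπ : θ ≤ π) :
    arctan √((1 + cos θ) / (1 - cos θ)) = (π - θ) / 2 := by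
  have htan : tan (π / 2 - θ / 2) = √((1 + cos θ) / (1 - cos θ)) := by
    rw [tan_pi_div_two_sub, tan_eq_sin_div_cos, inv_div, cos_half (by linarith) hθπ,
      sin_half_eq_sqrt hθ.le (by linarith), ← sqrt_div' _ (by linarith [cos_le_one θ]),
      div_div_div_cancel_right₀ two_ne_zero]
  rw [← htan, arctan_tan (by linarith) (by linarith), sub_div]

theorem cos_half_div_sin {θ : ℝ} (h : cos (θ / 2) ≠ 0) :
    cos (θ / 2) / sin θ = 1 / (2 * sin (θ / 2)) := by
  have hsin : sin θ = 2 * sin (θ / 2) * cos (θ / 2) := by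
    rw [← sin_two_mul, mul_div_cancel₀ θ two_ne_zero]
  rw [hsin, div_mul_cancel_right₀ h, one_div]

theorem one_div_two_mul_sin_half {θ : ℝ} (hθ : 0 ≤ θ) (hθπ : θ ≤ 2 * π) :
    1 / (2 * sin (θ / 2)) = √(1 / (2 * (1 - cos θ))) := by
  have h : 2 * (1 - cos θ) = 2 ^ 2 * ((1 - cos θ) / 2) := by ring
  rw [sqrt_div zero_le_one, sqrt_one, h, sqrt_mul (by positivity), sqrt_sq zero_le_two,
    sin_half_eq_sqrt hθ hθπ]

theorem tMax_eq_of_cos_eq {n m θ : ℝ} (hθ : 0 < θ) (hθπ : θ ≤ π)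
    (hcos : cos θ = 1 - m / (n - 1)) :
    tMax n m = (π - θ) / (4 * θ) := by
  have hn : n - 1 ≠ 0 := by
    intro h
    have hlt : cos θ < cos 0 := cos_lt_cos_of_nonneg_of_le_pi le_rfl hθπ hθ
    rw [hcos, h, div_zero, sub_zero, cos_zero] at hlt
    exact hlt.false
  have harg : (n - m - 1) / (n - 1) = cos θ := by
    rw [hcos]
    field_simp
    ring
  have hratio : (2 * n - m - 2) / m = (1 + cos θ) / (1 - cos θ) := by
    rw [hcos, sub_sub_cancel, div_div_eq_mul_div]
    congr 1
    field_simp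
    ring
  rw [tMax, harg, hratio, arctan_sqrt_one_add_cos_div_one_sub_cos hθ hθπ, arccos_cos hθ.le hθπ,
    div_div]
  ring

theorem two_mul_tMax_add_one_mul_of_cos_eq {n m θ : ℝ} (hθ : 0 < θ) (hθπ : θ ≤ π)
    (hcos : cos θ = 1 - m / (n - 1)) :
    (2 * tMax n m + 1) * θ = θ / 2 + π / 2 := by
  rw [tMax_eq_of_cos_eq hθ hθπ hcos]
  field_simp
  ring

theorem chebyshev_simplification_at_tmax_general (n m : ℝ) (h0 : 0 < m / (n - 1))
    (h2 : m / (n - 1) < 2) :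
    sin ((2 * tMax n m + 1) * arccos (1 - m / (n - 1))) / sin (arccos (1 - m / (n - 1))) =
      √((n - 1) / (2 * m)) := by
  have hcos : cos (arccos (1 - m / (n - 1))) = 1 - m / (n - 1) :=
    cos_arccos (by linarith) (by linarith)
  have hpos : 0 < arccos (1 - m / (n - 1)) := arccos_pos.2 (by linarith)
  have hlt : arccos (1 - m / (n - 1)) < π := arccos_lt_pi.2 (by linarith)
  set θ := arccos (1 - m / (n - 1))
  have hhalf : cos (θ / 2) ≠ 0 := (cos_pos_of_mem_Ioo ⟨by linarith, by linarith⟩).ne'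
  calc sin ((2 * tMax n m + 1) * θ) / sin θ
      = cos (θ / 2) / sin θ := by
        rw [two_mul_tMax_add_one_mul_of_cos_eq hpos hlt.le hcos, sin_add_pi_div_two]
    _ = 1 / (2 * sin (θ / 2)) := cos_half_div_sin hhalf
    _ = √(1 / (2 * (1 - cos θ))) := one_div_two_mul_sin_half hpos.le (by linarith)
    _ = √((n - 1) / (2 * m)) := by
        rw [hcos, sub_sub_cancel, ← mul_div_assoc, one_div_div]

theorem chebyshev_simplification_at_tmax (n m : ℝ) (hn : 1 < n) (hm0 : 0 < m)
    (hm2 : m < 2 * (n - 1)) :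
    Real.sin ((2 * tMax n m + 1) * arccos (1 - m / (n - 1))) /
        Real.sin (arccos (1 - m / (n - 1))) =
      Real.sqrt ((n - 1) / (2 * m)) :=
  chebyshev_simplification_at_tmax_general n m (div_pos hm0 (sub_pos.2 hn))
    ((div_lt_iff₀ (sub_pos.2 hn)).2 hm2)
end

section
/- For every real number a with 1.44 ≤ a ≤ 1.45, the quantity arctan(√(2a−1)) / (2·arccos((a−1)/a)) + π / arccos((a−1)/a) lies strictly between 2.8 and 2.9; in particular the closest integer to this second-maximum time is 3. -/
open Real

/-!
Put `θ = arccos ((a - 1) / a)`. The tangent half-angle formula for the cosine gives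
`θ = π - 2 * arctan √(2 * a - 1)`, so the second-maximum time equals `(5 * π / θ - 1) / 4`, a
decreasing function of `θ` alone. Bounding it by `2.8` and `2.9` means locating `θ` between
`5 * π / 12.6` and `5 * π / 12.2`. As `θ = π / 2 - arcsin x` with `x = (a - 1) / a` close to `0.31`,
the bounds `x ≤ arcsin x` and `arcsin x < y` whenever `x ≤ y - y ^ 3 / 6` are precise enough.
-/

section InverseTrigonometric

variable {x y : ℝ}

lemma le_arcsin_self (hx₀ : 0 ≤ x) (hx₁ : x ≤ 1) : x ≤ arcsin x := by
  simpa only [sin_arcsin (by linarith) hx₁] using sin_le (arcsin_nonneg.mpr hx₀)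

lemma arcsin_lt_of_le_sub_cube (hy : 0 < y) (hxy : x ≤ y - y ^ 3 / 6) : arcsin x < y := by
  rcases le_or_gt y (π / 2) with hy' | hy'
  · exact (arcsin_lt_iff_lt_sin' ⟨by linarith [pi_pos], hy'⟩).mpr
      (hxy.trans_lt (sin_gt_sub_cube hy))
  · exact (arcsin_le_pi_div_two x).trans_lt hy'

variable (x) in
lemma cos_two_mul_arctan : cos (2 * arctan x) = (1 - x ^ 2) / (1 + x ^ 2) := by
  rw [cos_two_mul, cos_sq_arctan]
  field_simp
  ring

lemma two_mul_arctan_eq_arccos (hx : 0 ≤ x) :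
    2 * arctan x = arccos ((1 - x ^ 2) / (1 + x ^ 2)) := by
  rw [← cos_two_mul_arctan, arccos_cos]
  · linarith [arctan_nonneg.mpr hx]
  · linarith [arctan_lt_pi_div_two x]

end InverseTrigonometric

/-- The time of the second probability maximum of the Szegedy quantum walk on a complete graph
with `n` nodes of which `(n - 1) / a` are marked: the time of the first maximum plus one period of
the marked-node probability. It does not depend on `n`. -/
noncomputable def secondMaximumTime (a : ℝ) : ℝ :=
  arctan √(2 * a - 1) / (2 * arccos ((a - 1) / a)) + π / arccos ((a - 1) / a)

section SecondMaximumTime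

variable {a t : ℝ}

lemma two_mul_arctan_sqrt_two_mul_sub_one (ha : 1 / 2 ≤ a) :
    2 * arctan √(2 * a - 1) = π - arccos ((a - 1) / a) := by
  rw [two_mul_arctan_eq_arccos (sqrt_nonneg _), sq_sqrt (by linarith), ← arccos_neg]
  congr 1
  have : a ≠ 0 := by linarith
  rw [add_sub_cancel]
  field_simp
  ring

lemma arccos_sub_one_div_self_pos (ha : 0 < a) : 0 < arccos ((a - 1) / a) :=
  arccos_pos.mpr ((div_lt_one ha).mpr (sub_one_lt a))

lemma secondMaximumTime_eq (ha : 1 / 2 ≤ a) :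
    secondMaximumTime a = (5 * π / arccos ((a - 1) / a) - 1) / 4 := by
  have hθ : arccos ((a - 1) / a) ≠ 0 := (arccos_sub_one_div_self_pos (by linarith)).ne'
  rw [secondMaximumTime]
  field_simp
  linear_combination 2 * two_mul_arctan_sqrt_two_mul_sub_one ha

lemma lt_secondMaximumTime_iff (ha : 1 / 2 ≤ a) (ht : 0 < 4 * t + 1) :
    t < secondMaximumTime a ↔ arccos ((a - 1) / a) < 5 * π / (4 * t + 1) := by
  rw [secondMaximumTime_eq ha, lt_div_iff₀' four_pos, lt_sub_iff_add_lt,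
    lt_div_comm₀ ht (arccos_sub_one_div_self_pos (by linarith))]

lemma secondMaximumTime_lt_iff (ha : 1 / 2 ≤ a) (ht : 0 < 4 * t + 1) :
    secondMaximumTime a < t ↔ 5 * π / (4 * t + 1) < arccos ((a - 1) / a) := by
  rw [secondMaximumTime_eq ha, div_lt_iff₀' four_pos, sub_lt_iff_lt_add,
    div_lt_comm₀ (arccos_sub_one_div_self_pos (by linarith)) ht]

end SecondMaximumTime

theorem second_maximum_time_bounds (a : ℝ) (ha1 : 1.44 ≤ a) (ha2 : a ≤ 1.45) :
    2.8 < arctan (Real.sqrt (2 * a - 1)) / (2 * arccos ((a - 1) / a)) +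
        π / arccos ((a - 1) / a) ∧
      arctan (Real.sqrt (2 * a - 1)) / (2 * arccos ((a - 1) / a)) +
          π / arccos ((a - 1) / a) < 2.9 ∧
      round (arctan (Real.sqrt (2 * a - 1)) / (2 * arccos ((a - 1) / a)) +
          π / arccos ((a - 1) / a)) = 3 := by
  change 2.8 < secondMaximumTime a ∧ secondMaximumTime a < 2.9 ∧ round (secondMaximumTime a) = 3
  have ha : 0 < a := by linarith
  have hx_lower : 0.305 ≤ (a - 1) / a := by rw [le_div_iff₀ ha]; linarith
  have hx_upper : (a - 1) / a ≤ 0.311 := by rw [div_le_iff₀ ha]; linarith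
  have harcsin_lower : (a - 1) / a ≤ arcsin ((a - 1) / a) :=
    le_arcsin_self (by linarith) (by linarith)
  have harcsin_upper : arcsin ((a - 1) / a) < 0.32 :=
    arcsin_lt_of_le_sub_cube (by norm_num) (hx_upper.trans (by norm_num))
  have hlower : 2.8 < secondMaximumTime a := by
    rw [lt_secondMaximumTime_iff (by linarith) (by norm_num), arccos_eq_pi_div_two_sub_arcsin,
      lt_div_iff₀ (by norm_num)]
    linarith [pi_lt_d2]
  have hupper : secondMaximumTime a < 2.9 := by
    rw [secondMaximumTime_lt_iff (by linarith) (by norm_num), arccos_eq_pi_div_two_sub_arcsin,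
      div_lt_iff₀ (by norm_num)]
    linarith [pi_gt_d2]
  exact ⟨hlower, hupper, round_eq_iff.mpr ⟨by push_cast; linarith, by push_cast; linarith⟩⟩
end

section
/- Let a > 1 be real, set θ := arccos((a−1)/a), t* := arctan(√(2a−1)) / (2θ), and B := (a/(2a−1))·cos(2t*θ)·(sin(2t*θ)/sin θ) + (a−1)/(2a−1). Then the limit as n → ∞ of P(t*, n, (n−1)/a) exists and equals ((a−1)·B² + 1)/a². -/
open Real Filter Topology

/-- Trig-extended marked-node probability of the Szegedy quantum walk on a complete graph. -/
noncomputable def P (t n m : ℝ) : ℝ :=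
  m * (n - m) / (n * (n - 1)) *
      ((n - 1) / (2 * n - m - 2) * Real.cos (2 * t * arccos ((n - m - 1) / (n - 1))) *
          (Real.sin (2 * t * arccos ((n - m - 1) / (n - 1))) /
            Real.sin (arccos ((n - m - 1) / (n - 1)))) +
        (n - m - 1) / (2 * n - m - 2)) ^ 2 +
    m * (m - 1) / (n * (n - 1))

/-!
Up to the rational weights `m (n - m) / (n (n - 1))` and `m (m - 1) / (n (n - 1))`, the value
`P t n m` depends on `n` and `m` only through `c = (n - m - 1) / (n - 1)`, and continuously so for
`-1 < c < 1`. If `m / n → α` as `n → ∞`, then `c → 1 - α` and the weights tend to `α (1 - α)` and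
`α ^ 2`, so for every fixed time `t` the limit of `P` depends on `α` alone.
-/

/-- The amplitude squared in `P t n m`, without the weight `m (n - m) / (n (n - 1))`, as a function
of the time `t` and of `c = cos θ`, so that its limit follows from continuity in `c`. Both
coefficients in `P` depend on `c` alone: `1 + c = (2 n - m - 2) / (n - 1)` turns them into
`1 / (1 + c)` and `c / (1 + c)`. -/
noncomputable def markedAmplitude (t c : ℝ) : ℝ :=
  (Real.cos (2 * t * arccos c) * (Real.sin (2 * t * arccos c) / Real.sin (arccos c)) + c) / (1 + c)

theorem P_eq_markedAmplitude (t m : ℝ) {n : ℝ} (hn : n ≠ 1) :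
    P t n m = m * (n - m) / (n * (n - 1)) * markedAmplitude t ((n - m - 1) / (n - 1)) ^ 2 +
      m * (m - 1) / (n * (n - 1)) := by
  have hn' : n - 1 ≠ 0 := sub_ne_zero.mpr hn
  have one_add_cos : 1 + (n - m - 1) / (n - 1) = (2 * n - m - 2) / (n - 1) := by
    field_simp
    ring
  have coeff_div : (n - 1) / (2 * n - m - 2) = 1 / (1 + (n - m - 1) / (n - 1)) := by
    rw [one_add_cos, one_div_div]
  have cos_div : (n - m - 1) / (2 * n - m - 2) =
      (n - m - 1) / (n - 1) / (1 + (n - m - 1) / (n - 1)) := by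
    rw [one_add_cos, div_div_div_cancel_right₀ hn']
  rw [P, markedAmplitude, coeff_div, cos_div]
  ring

theorem markedAmplitude_sub_one_div (t : ℝ) {a : ℝ} (ha : a ≠ 0) :
    markedAmplitude t ((a - 1) / a) =
      a / (2 * a - 1) * Real.cos (2 * t * arccos ((a - 1) / a)) *
          (Real.sin (2 * t * arccos ((a - 1) / a)) / Real.sin (arccos ((a - 1) / a))) +
        (a - 1) / (2 * a - 1) := by
  have one_add_cos : 1 + (a - 1) / a = (2 * a - 1) / a := by
    field_simp
    ring
  rw [markedAmplitude, one_add_cos, div_div_eq_mul_div, add_mul, div_mul_cancel₀ _ ha]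
  ring

theorem continuousAt_markedAmplitude (t : ℝ) {c : ℝ} (hc : c ∈ Set.Ioo (-1) 1) :
    ContinuousAt (markedAmplitude t) c := by
  have sin_ne : Real.sin (arccos c) ≠ 0 :=
    (sin_pos_of_pos_of_lt_pi (arccos_pos.mpr hc.2) (arccos_lt_pi.mpr hc.1)).ne'
  have one_add_ne : 1 + c ≠ 0 := by linarith [hc.1]
  unfold markedAmplitude
  fun_prop (disch := assumption)

section DensityLimit

variable {ι : Type*} {l : Filter ι} {n m : ι → ℝ} {α : ℝ}

theorem tendsto_div_sub_one (hn : Tendsto n l atTop)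
    (hm : Tendsto (fun i => m i / n i) l (𝓝 α)) :
    Tendsto (fun i => m i / (n i - 1)) l (𝓝 α) := by
  have inv_tendsto : Tendsto (fun i => (n i)⁻¹) l (𝓝 0) := hn.inv_tendsto_atTop
  have quot_tendsto := hm.div (inv_tendsto.const_sub 1) (by norm_num)
  rw [sub_zero, div_one] at quot_tendsto
  refine quot_tendsto.congr' ?_
  filter_upwards [hn.eventually_ne_atTop 0] with i hi
  rw [Pi.div_apply, ← div_mul_eq_div_div, mul_one_sub, mul_inv_cancel₀ hi]

theorem tendsto_sub_sub_one_div_sub_one (hn : Tendsto n l atTop)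
    (hm : Tendsto (fun i => m i / n i) l (𝓝 α)) :
    Tendsto (fun i => (n i - m i - 1) / (n i - 1)) l (𝓝 (1 - α)) := by
  refine ((tendsto_div_sub_one hn hm).const_sub 1).congr' ?_
  filter_upwards [hn.eventually_gt_atTop 1] with i hi
  rw [one_sub_div (sub_pos.mpr hi).ne', sub_right_comm]

theorem tendsto_mul_sub_div_mul_sub_one (hn : Tendsto n l atTop)
    (hm : Tendsto (fun i => m i / n i) l (𝓝 α)) :
    Tendsto (fun i => m i * (n i - m i) / (n i * (n i - 1))) l (𝓝 (α * (1 - α))) := by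
  refine ((tendsto_div_sub_one hn hm).mul (hm.const_sub 1)).congr' ?_
  filter_upwards [hn.eventually_gt_atTop 0] with i hi
  rw [one_sub_div hi.ne', div_mul_div_comm, mul_comm (n i)]

theorem tendsto_mul_sub_one_div_mul_sub_one (hn : Tendsto n l atTop)
    (hm : Tendsto (fun i => m i / n i) l (𝓝 α)) :
    Tendsto (fun i => m i * (m i - 1) / (n i * (n i - 1))) l (𝓝 (α ^ 2)) := by
  have inv_tendsto : Tendsto (fun i => 1 / n i) l (𝓝 0) := hn.const_div_atTop 1
  have prod_tendsto := (hm.sub inv_tendsto).mul (tendsto_div_sub_one hn hm)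
  rw [sub_zero, ← sq] at prod_tendsto
  refine prod_tendsto.congr fun i => ?_
  rw [← sub_div, div_mul_div_comm, mul_comm (m i)]

theorem tendsto_P_of_tendsto_div (t : ℝ) (hα : α ∈ Set.Ioo 0 2) (hn : Tendsto n l atTop)
    (hm : Tendsto (fun i => m i / n i) l (𝓝 α)) :
    Tendsto (fun i => P t (n i) (m i)) l
      (𝓝 (α * (1 - α) * markedAmplitude t (1 - α) ^ 2 + α ^ 2)) := by
  have cos_mem : 1 - α ∈ Set.Ioo (-1) 1 := ⟨by linarith [hα.2], by linarith [hα.1]⟩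
  have amplitude_tendsto := (continuousAt_markedAmplitude t cos_mem).tendsto.comp
    (tendsto_sub_sub_one_div_sub_one hn hm)
  refine (((tendsto_mul_sub_div_mul_sub_one hn hm).mul (amplitude_tendsto.pow 2)).add
    (tendsto_mul_sub_one_div_mul_sub_one hn hm)).congr' ?_
  filter_upwards [hn.eventually_ne_atTop 1] with i hi
  exact (P_eq_markedAmplitude t (m i) hi).symm

theorem limit_P_at_top_general (t : ℝ) {a : ℝ} (ha : 1 / 2 < a) (hn : Tendsto n l atTop)
    (hm : Tendsto (fun i => m i / n i) l (𝓝 a⁻¹)) :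
    Tendsto (fun i => P t (n i) (m i)) l
      (𝓝 (((a - 1) *
          (a / (2 * a - 1) * Real.cos (2 * t * arccos ((a - 1) / a)) *
              (Real.sin (2 * t * arccos ((a - 1) / a)) / Real.sin (arccos ((a - 1) / a))) +
            (a - 1) / (2 * a - 1)) ^ 2 + 1) / a ^ 2)) := by
  have a_pos : 0 < a := by linarith
  have inv_mem : a⁻¹ ∈ Set.Ioo 0 2 :=
    ⟨inv_pos.mpr a_pos, inv_lt_of_inv_lt₀ two_pos (by linarith)⟩
  have cos_eq : 1 - a⁻¹ = (a - 1) / a := by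
    rw [sub_div, div_self a_pos.ne', one_div]
  convert tendsto_P_of_tendsto_div t inv_mem hn hm using 2
  rw [cos_eq, markedAmplitude_sub_one_div t a_pos.ne']
  field_simp

end DensityLimit

theorem tendsto_sub_one_div_div_atTop (a : ℝ) :
    Tendsto (fun n : ℝ => (n - 1) / a / n) atTop (𝓝 a⁻¹) := by
  have inv_tendsto : Tendsto (fun n : ℝ => n⁻¹) atTop (𝓝 0) := tendsto_inv_atTop_zero
  have quot_tendsto := (inv_tendsto.const_sub 1).div_const a
  rw [sub_zero, one_div] at quot_tendsto
  refine quot_tendsto.congr' ?_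
  filter_upwards [eventually_ne_atTop 0] with n hn
  field_simp

theorem limit_P_at_top (a : ℝ) (ha : 1 < a) :
    Filter.Tendsto
      (fun n : ℝ =>
        P (arctan (Real.sqrt (2 * a - 1)) / (2 * arccos ((a - 1) / a))) n ((n - 1) / a))
      atTop
      (𝓝 (((a - 1) *
          (a / (2 * a - 1) *
              Real.cos (2 * (arctan (Real.sqrt (2 * a - 1)) / (2 * arccos ((a - 1) / a))) *
                arccos ((a - 1) / a)) *
              (Real.sin (2 * (arctan (Real.sqrt (2 * a - 1)) / (2 * arccos ((a - 1) / a))) *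
                  arccos ((a - 1) / a)) /
                Real.sin (arccos ((a - 1) / a))) +
            (a - 1) / (2 * a - 1)) ^ 2 + 1) / a ^ 2)) :=
  limit_P_at_top_general _ (by linarith) tendsto_id (tendsto_sub_one_div_div_atTop a)
end

section
/- Let a > 1 be real, set θ := arccos((a−1)/a), t* := arctan(√(2a−1)) / (2θ), and B := (a/(2a−1))·cos(2t*θ)·(sin(2t*θ)/sin θ) + (a−1)/(2a−1). Then the limit as n → 1⁺ of P(t*, n, (n−1)/a) exists and equals (B² − 1)/a. -/
open Real Filter Topology Set

/-!
Along the ray `n - 1 = a * m` a factor `m` cancels in every quotient inside `P`. The angle and the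
squared term are therefore constant there, while the two coefficients become rational functions of
`n` that are regular at `n = 1`, so the limit is obtained by evaluating them at `n = 1`.
-/

/-- The value, depending only on `a` and `t`, taken along the ray `n - 1 = a * m` by the expression
that is squared in `P t n m`; this is the quantity `B` when `t = t*`. -/
noncomputable def rayAmplitude (a t : ℝ) : ℝ :=
  a / (2 * a - 1) * cos (2 * t * arccos ((a - 1) / a)) *
      (sin (2 * t * arccos ((a - 1) / a)) / sin (arccos ((a - 1) / a))) +
    (a - 1) / (2 * a - 1)

section Ray

variable {a n m : ℝ}

lemma sub_sub_one_div_sub_one_of_ray (hm : m ≠ 0) (hn : n - 1 = a * m) :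
    (n - m - 1) / (n - 1) = (a - 1) / a := by
  rw [hn, show n - m - 1 = (a - 1) * m by linear_combination hn, mul_div_mul_right _ _ hm]

lemma sub_one_div_two_mul_sub_of_ray (hm : m ≠ 0) (hn : n - 1 = a * m) :
    (n - 1) / (2 * n - m - 2) = a / (2 * a - 1) := by
  rw [hn, show 2 * n - m - 2 = (2 * a - 1) * m by linear_combination 2 * hn,
    mul_div_mul_right _ _ hm]

lemma sub_sub_one_div_two_mul_sub_of_ray (hm : m ≠ 0) (hn : n - 1 = a * m) :
    (n - m - 1) / (2 * n - m - 2) = (a - 1) / (2 * a - 1) := by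
  rw [show n - m - 1 = (a - 1) * m by linear_combination hn,
    show 2 * n - m - 2 = (2 * a - 1) * m by linear_combination 2 * hn, mul_div_mul_right _ _ hm]

lemma mul_div_mul_sub_one_of_ray (hm : m ≠ 0) (hn : n - 1 = a * m) (x : ℝ) :
    m * x / (n * (n - 1)) = x / n / a := by
  rw [hn, show n * (a * m) = m * (n * a) by ring, mul_div_mul_left _ _ hm, div_div]

theorem P_eq_of_ray (t : ℝ) (hm : m ≠ 0) (hn : n - 1 = a * m) :
    P t n m = ((n - m) * rayAmplitude a t ^ 2 + (m - 1)) / n / a := by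
  rw [P, sub_sub_one_div_sub_one_of_ray hm hn, sub_one_div_two_mul_sub_of_ray hm hn,
    sub_sub_one_div_two_mul_sub_of_ray hm hn, ← rayAmplitude,
    mul_div_mul_sub_one_of_ray hm hn, mul_div_mul_sub_one_of_ray hm hn]
  ring

end Ray

lemma tendsto_weighted_sum_nhds_one (a b : ℝ) :
    Tendsto (fun n : ℝ ↦ ((n - (n - 1) / a) * b + ((n - 1) / a - 1)) / n / a) (𝓝 1)
      (𝓝 ((b - 1) / a)) := by
  have hcont : ContinuousAt
      (fun n : ℝ ↦ ((n - (n - 1) / a) * b + ((n - 1) / a - 1)) / n / a) 1 := by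
    fun_prop (disch := exact one_ne_zero)
  simpa [← sub_eq_add_neg] using hcont.tendsto

theorem limit_P_at_one_general (a t : ℝ) (ha : 1 / 2 < a) :
    Tendsto (fun n : ℝ ↦ P t n ((n - 1) / a)) (𝓝[≠] 1)
      (𝓝 ((rayAmplitude a t ^ 2 - 1) / a)) := by
  have ha₀ : a ≠ 0 := by linarith
  have hlim := tendsto_weighted_sum_nhds_one a (rayAmplitude a t ^ 2)
  refine (hlim.mono_left nhdsWithin_le_nhds).congr' ?_
  filter_upwards [self_mem_nhdsWithin] with n hn
  have hm : (n - 1) / a ≠ 0 := div_ne_zero (sub_ne_zero.mpr hn) ha₀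
  exact (P_eq_of_ray t hm (mul_div_cancel₀ _ ha₀).symm).symm

theorem limit_P_at_one (a : ℝ) (ha : 1 < a) :
    Filter.Tendsto
      (fun n : ℝ =>
        P (arctan (Real.sqrt (2 * a - 1)) / (2 * arccos ((a - 1) / a))) n ((n - 1) / a))
      (𝓝[>] (1 : ℝ))
      (𝓝 (((a / (2 * a - 1) *
              Real.cos (2 * (arctan (Real.sqrt (2 * a - 1)) / (2 * arccos ((a - 1) / a))) *
                arccos ((a - 1) / a)) *
              (Real.sin (2 * (arctan (Real.sqrt (2 * a - 1)) / (2 * arccos ((a - 1) / a))) *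
                  arccos ((a - 1) / a)) /
                Real.sin (arccos ((a - 1) / a))) +
            (a - 1) / (2 * a - 1)) ^ 2 - 1) / a)) :=
  (limit_P_at_one_general a _ (by linarith)).mono_left
    (nhdsWithin_mono 1 fun _ hn ↦ ne_of_gt hn)
end

section
/- Fix a real number m > 0. Then the limit as n → ∞ of t_max(n,m) / √(n/(2m)) equals π/4; that is, for n ≫ m the maximum-probability time of the Szegedy quantum walk on a complete graph scales as (π/4)·√(n/(2m)). -/
open Real Filter Topology

/-!
The half-angle formula `arccos (1 - 2 s ^ 2) = 2 arcsin s` and `arcsin s ~ s` give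
`arccos (1 - x) ~ √(2 x)` as `x → 0⁺`. The denominator of `tMax n m` involves
`arccos (1 - m / (n - 1))`, which is therefore equivalent to `√(2 m / n)`, while the numerator
tends to `π / 2`.
-/

open Asymptotics

theorem isEquivalent_sqrt_of_isEquivalent {α : Type*} {l : Filter α} {u v : α → ℝ}
    (h : u ~[l] v) : (fun x ↦ √(u x)) ~[l] fun x ↦ √(v x) := by
  obtain ⟨φ, hφ, huv⟩ := h.exists_eq_mul
  have hφ_sqrt : Tendsto (fun x ↦ √(φ x)) l (𝓝 1) := by simpa using hφ.sqrt
  refine isEquivalent_iff_exists_eq_mul.2 ⟨_, hφ_sqrt, ?_⟩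
  filter_upwards [huv, hφ.eventually_const_le zero_lt_one] with x hx hφx
  simp only [hx, Pi.mul_apply, sqrt_mul hφx]

theorem isEquivalent_arcsin : arcsin ~[𝓝 0] id := by
  have h : HasDerivAt arcsin 1 0 := by
    simpa using hasDerivAt_arcsin (x := 0) (by norm_num) (by norm_num)
  simpa using! h.isLittleO

theorem arccos_one_sub_two_mul_sq {s : ℝ} (hs₀ : 0 ≤ s) (hs₁ : s ≤ 1) :
    arccos (1 - 2 * s ^ 2) = 2 * arcsin s := by
  have hcos : cos (2 * arcsin s) = 1 - 2 * s ^ 2 := by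
    rw [cos_two_mul', cos_sq', sin_arcsin (by linarith) hs₁]
    ring
  rw [← hcos, arccos_cos]
  · linarith [arcsin_nonneg.2 hs₀]
  · linarith [arcsin_le_pi_div_two s]

theorem isEquivalent_arccos_one_sub :
    (fun x ↦ arccos (1 - x)) ~[𝓝[≥] 0] fun x ↦ √(2 * x) := by
  have hcont : Continuous fun x : ℝ ↦ √(x / 2) := by fun_prop
  have hlim : Tendsto (fun x : ℝ ↦ √(x / 2)) (𝓝[≥] 0) (𝓝 0) :=
    (hcont.tendsto' 0 0 (by simp)).mono_left nhdsWithin_le_nhds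
  have harcsin : (fun x ↦ 2 * arcsin √(x / 2)) ~[𝓝[≥] 0] fun x ↦ 2 * √(x / 2) :=
    IsEquivalent.refl.mul (isEquivalent_arcsin.comp_tendsto hlim)
  refine (harcsin.congr_left ?_).congr_right ?_
  · filter_upwards [Icc_mem_nhdsGE (zero_lt_two' ℝ)] with x ⟨hx₀, hx₂⟩
    have hs : √(x / 2) ≤ 1 := sqrt_le_one.2 (by linarith)
    have h := arccos_one_sub_two_mul_sq (sqrt_nonneg _) hs
    rw [sq_sqrt (by positivity), mul_div_cancel₀ x two_ne_zero] at h
    exact h.symm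
  · refine .of_forall fun x ↦ ?_
    calc 2 * √(x / 2) = √(2 ^ 2) * √(x / 2) := by rw [sqrt_sq zero_le_two]
      _ = √(2 ^ 2 * (x / 2)) := (sqrt_mul (by positivity) _).symm
      _ = √(2 * x) := by ring_nf

theorem isEquivalent_arccos_sub_div_sub {m : ℝ} (hm : 0 ≤ m) :
    (fun n ↦ arccos ((n - m - 1) / (n - 1))) ~[atTop] fun n ↦ √(2 * m / n) := by
  have hpred : (fun n : ℝ ↦ n - 1) ~[atTop] id :=
    IsEquivalent.refl.sub_isLittleO (isLittleO_const_id_atTop 1)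
  have hsub : Tendsto (fun n : ℝ ↦ n - 1) atTop atTop := hpred.symm.tendsto_atTop tendsto_id
  have hlim : Tendsto (fun n ↦ m / (n - 1)) atTop (𝓝[≥] 0) := by
    refine tendsto_nhdsWithin_iff.2 ⟨hsub.const_div_atTop m, ?_⟩
    filter_upwards [hsub.eventually_ge_atTop 0] with n hn using div_nonneg hm hn
  have hangle : (fun n ↦ arccos ((n - m - 1) / (n - 1))) =ᶠ[atTop]
      fun n ↦ arccos (1 - m / (n - 1)) := by
    filter_upwards [hsub.eventually_ne_atTop 0] with n hn
    rw [one_sub_div hn, sub_right_comm]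
  calc (fun n ↦ arccos ((n - m - 1) / (n - 1)))
      =ᶠ[atTop] fun n ↦ arccos (1 - m / (n - 1)) := hangle
    _ ~[atTop] fun n ↦ √(2 * (m / (n - 1))) := isEquivalent_arccos_one_sub.comp_tendsto hlim
    _ = fun n ↦ √(2 * m / (n - 1)) := by simp only [mul_div_assoc]
    _ ~[atTop] fun n ↦ √(2 * m / n) :=
      isEquivalent_sqrt_of_isEquivalent (IsEquivalent.refl.div hpred)

theorem tendsto_arctan_sqrt_sub_div {m : ℝ} (hm : 0 < m) :
    Tendsto (fun n : ℝ ↦ arctan √((2 * n - m - 2) / m)) atTop (𝓝 (π / 2)) := by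
  have hlin : Tendsto (fun n : ℝ ↦ 2 * n - m - 2) atTop atTop := by
    simp only [sub_eq_add_neg]
    exact tendsto_atTop_add_const_right _ _
      (tendsto_atTop_add_const_right _ _ (tendsto_id.const_mul_atTop two_pos))
  exact (tendsto_arctan_atTop.mono_right nhdsWithin_le_nhds).comp
    (tendsto_sqrt_atTop.comp (hlin.atTop_div_const hm))

theorem isEquivalent_tMax {m : ℝ} (hm : 0 < m) :
    (fun n ↦ tMax n m) ~[atTop] fun n ↦ π / 4 * √(n / (2 * m)) := by
  have hnum := (isEquivalent_const_iff_tendsto pi_div_two_pos.ne').2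
    (tendsto_arctan_sqrt_sub_div hm)
  have hden : (fun n ↦ 2 * arccos ((n - m - 1) / (n - 1))) ~[atTop] fun n ↦ 2 * √(2 * m / n) :=
    IsEquivalent.refl.mul (isEquivalent_arccos_sub_div_sub hm.le)
  refine (hnum.div hden).congr_right (.of_forall fun n ↦ ?_)
  calc π / 2 / (2 * √(2 * m / n)) = π / 2 / (2 * (√(n / (2 * m)))⁻¹) := by
        rw [← sqrt_inv, inv_div]
    _ = π / 4 * √(n / (2 * m)) := by rw [div_mul_eq_div_div, div_inv_eq_mul]; ring

theorem tMax_asymptotic_scaling (m : ℝ) (hm : 0 < m) :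
    Filter.Tendsto (fun n : ℝ => tMax n m / Real.sqrt (n / (2 * m))) atTop
      (𝓝 (π / 4)) := by
  refine IsEquivalent.tendsto_const
    (((isEquivalent_tMax hm).div IsEquivalent.refl).congr_right ?_)
  filter_upwards [eventually_gt_atTop 0] with n hn
  have hscale : √(n / (2 * m)) ≠ 0 := by positivity
  exact mul_div_cancel_right₀ (π / 4) hscale
end
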